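/- Let H be a complex Hilbert space, M a von Neumann algebra acting on H, and ξ₀ a cyclic and separating vector for M. If ζ ∈ P♯, ξ₀ − ζ ∈ P♯, and ⟨ζ, ξ₀ − ζ⟩ = 0, then there exists a projection e ∈ M such that ζ = e ξ₀. -/

import Mathlib

open scoped InnerProductSpace
open Filter

variable {H : Type*} [NormedAddCommGroup H] [InnerProductSpace ℂ H] [CompleteSpace H]

/-- The positive cone `P♯`: the closure in `H` of `{a ξ₀ : a ∈ M, a positive}`. -/
def sharpCone (M : VonNeumannAlgebra H) (ξ₀ : H) : Set H :=
  closure {ζ : H | ∃ a : H →L[ℂ] H, a ∈ M ∧ a.IsPositive ∧ a ξ₀ = ζ}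

/-- `ξ₀` is a cyclic vector for `M`: the linear span of `{x ξ₀ : x ∈ M}` is dense in `H`. -/
def IsCyclicVector (M : VonNeumannAlgebra H) (ξ₀ : H) : Prop :=
  Dense ((Submodule.span ℂ ((fun x : H →L[ℂ] H => x ξ₀) '' (M : Set (H →L[ℂ] H)))) : Set H)

/-- `ξ₀` is a separating vector for `M`: `x ∈ M` and `x ξ₀ = 0` imply `x = 0`. -/
def IsSeparatingVector (M : VonNeumannAlgebra H) (ξ₀ : H) : Prop :=
  ∀ x : H →L[ℂ] H, x ∈ M → x ξ₀ = 0 → x = 0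

/-!
Since `ξ₀` is separating for `M`, it is cyclic for the commutant `M'`. Each `v ∈ P♯` gives a
positive form `x ↦ ⟪x v, x ξ₀⟫` on `M'`. For `v = ζ` and `v = ξ₀ - ζ` this says that the form of `ζ`
lies between `0` and `‖x ξ₀‖²`, so `x ξ₀ ↦ x ζ` extends to an operator `0 ≤ a ≤ 1` on `H`; it
commutes with `M'`, hence lies in `M`, and `a ξ₀ = ζ`. Orthogonality reads
`⟪(1 - a) a ξ₀, ξ₀⟫ = 0`, which forces `(1 - a) a ξ₀ = 0` because `(1 - a) a` is positive, and then
`a² = a` because `ξ₀` is separating.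
-/

open scoped ComplexOrder

section PositiveForms

variable {V E : Type*} [AddCommGroup V] [Module ℂ V] [NormedAddCommGroup E] [InnerProductSpace ℂ E]

theorem inner_map_map_comm_of_inner_map_self_comm {A B : V →ₗ[ℂ] E}
    (h : ∀ x, ⟪B x, A x⟫_ℂ = ⟪A x, B x⟫_ℂ) (x y : V) : ⟪B x, A y⟫_ℂ = ⟪A x, B y⟫_ℂ := by
  have hadd := h (x + y)
  have hadd_I := h (x + Complex.I • y)
  simp only [map_add, map_smul, inner_add_left, inner_add_right, inner_smul_left,
    inner_smul_right, Complex.conj_I] at hadd hadd_I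
  have hsum : ⟪B x, A y⟫_ℂ + ⟪B y, A x⟫_ℂ = ⟪A x, B y⟫_ℂ + ⟪A y, B x⟫_ℂ := by
    linear_combination hadd - h x - h y
  have hdiff : ⟪B x, A y⟫_ℂ - ⟪B y, A x⟫_ℂ = ⟪A x, B y⟫_ℂ - ⟪A y, B x⟫_ℂ :=
    mul_left_cancel₀ Complex.I_ne_zero <| by
      linear_combination hadd_I - h x + Complex.I ^ 2 * h y
  linear_combination (hsum + hdiff) / 2

theorem norm_map_le_norm_map_of_inner_nonneg_of_inner_le {A B : V →ₗ[ℂ] E} (hA : DenseRange A)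
    (hnonneg : ∀ x, 0 ≤ ⟪B x, A x⟫_ℂ) (hle : ∀ x, ⟪B x, A x⟫_ℂ ≤ ⟪A x, A x⟫_ℂ) (x : V) :
    ‖B x‖ ≤ ‖A x‖ := by
  have hre_le : ∀ y, (⟪B y, A y⟫_ℂ).re ≤ ‖A y‖ ^ 2 := fun y =>
    (Complex.re_le_re (hle y)).trans_eq (inner_self_eq_norm_sq (𝕜 := ℂ) (A y))
  have hcomm : ∀ y, ⟪B y, A x⟫_ℂ = ⟪A y, B x⟫_ℂ := fun y =>
    inner_map_map_comm_of_inner_map_self_comm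
      (fun z => by rw [← inner_conj_symm (A z), (hnonneg z).isSelfAdjoint.conj_eq]) y x
  -- Only `v = B x` is needed, but the bound is provable for `v = A y`, where it expresses that the
  -- form is nonnegative at `x - y`; density bridges the two.
  have hdual : ∀ v, 2 * (⟪B x, v⟫_ℂ).re ≤ ‖A x‖ ^ 2 + ‖v‖ ^ 2 := fun v => by
    refine hA.induction_on (p := fun v => 2 * (⟪B x, v⟫_ℂ).re ≤ ‖A x‖ ^ 2 + ‖v‖ ^ 2) v
      (isClosed_le (by fun_prop) (by fun_prop)) fun y => ?_
    have hsub : 0 ≤ (⟪B (x - y), A (x - y)⟫_ℂ).re := Complex.re_le_re (hnonneg _)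
    have hcross : (⟪B y, A x⟫_ℂ).re = (⟪B x, A y⟫_ℂ).re := by
      rw [hcomm, ← inner_conj_symm, Complex.conj_re]
    simp only [map_sub, inner_sub_left, inner_sub_right, Complex.sub_re] at hsub
    linarith [hre_le x, hre_le y]
  have hself : (⟪B x, B x⟫_ℂ).re = ‖B x‖ ^ 2 := inner_self_eq_norm_sq (𝕜 := ℂ) (B x)
  exact le_of_sq_le_sq (by linarith [hdual (B x)]) (norm_nonneg _)

theorem nonneg_of_denseRange_of_inner_nonneg {ι : Type*} {f : ι → E} (hf : DenseRange f)
    {T : E →L[ℂ] E} (h : ∀ i, 0 ≤ ⟪T (f i), f i⟫_ℂ) : 0 ≤ T := by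
  have hnonneg : ∀ v, 0 ≤ ⟪T v, v⟫_ℂ := fun v =>
    hf.induction_on (p := fun v => 0 ≤ ⟪T v, v⟫_ℂ) v (isClosed_le (by fun_prop) (by fun_prop)) h
  rw [ContinuousLinearMap.nonneg_iff_isPositive, ContinuousLinearMap.isPositive_iff_complex]
  exact fun v => ⟨(Complex.eq_re_of_ofReal_le (r := 0) (by simpa using hnonneg v)).symm,
    (Complex.nonneg_iff.1 (hnonneg v)).1⟩

theorem exists_nonneg_le_one_map_eq {A B : V →ₗ[ℂ] H} (hA : DenseRange A)
    (hnonneg : ∀ x, 0 ≤ ⟪B x, A x⟫_ℂ) (hle : ∀ x, ⟪B x, A x⟫_ℂ ≤ ⟪A x, A x⟫_ℂ) :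
    ∃ T : H →L[ℂ] H, 0 ≤ T ∧ T ≤ 1 ∧ ∀ x, T (A x) = B x := by
  have hnorm : ∀ x, ‖B x‖ ≤ 1 * ‖A x‖ := fun x =>
    (norm_map_le_norm_map_of_inner_nonneg_of_inner_le hA hnonneg hle x).trans_eq (one_mul _).symm
  have hT : ∀ x, B.extendOfNorm A (A x) = B x := LinearMap.extendOfNorm_eq hA ⟨1, hnorm⟩
  refine ⟨B.extendOfNorm A, ?_, sub_nonneg.1 ?_, hT⟩
  · exact nonneg_of_denseRange_of_inner_nonneg hA fun x => by simpa only [hT] using hnonneg x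
  · refine nonneg_of_denseRange_of_inner_nonneg hA fun x => ?_
    simpa [hT, inner_sub_left] using hle x

theorem apply_eq_zero_of_nonneg_of_inner_eq_zero {T : H →L[ℂ] H} (hT : 0 ≤ T) {v : H}
    (hv : ⟪T v, v⟫_ℂ = 0) : T v = 0 := by
  obtain ⟨S, rfl⟩ := CStarAlgebra.nonneg_iff_eq_star_mul_self.1 hT
  have hSv : S v = 0 := by
    rwa [ContinuousLinearMap.star_eq_adjoint, mul_apply_eq_comp,
      ContinuousLinearMap.adjoint_inner_left, inner_self_eq_zero] at hv
  simp [hSv]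

theorem apply_apply_eq_of_inner_sub_eq_zero {a : H →L[ℂ] H} (h₀ : 0 ≤ a) (h₁ : a ≤ 1) {ξ : H}
    (hξ : ⟪a ξ, ξ - a ξ⟫_ℂ = 0) : a (a ξ) = a ξ := by
  have hcomm : Commute (1 - a) a := (Commute.one_left a).sub_left (Commute.refl a)
  have hzero : ((1 - a) * a) ξ = 0 := by
    refine apply_eq_zero_of_nonneg_of_inner_eq_zero
      (Commute.mul_nonneg (sub_nonneg.2 h₁) h₀ hcomm) ?_
    have hsymm := (IsSelfAdjoint.of_nonneg (sub_nonneg.2 h₁)).isSymmetric (a ξ) ξ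
    exact hsymm.trans hξ
  exact (sub_eq_zero.1 hzero).symm

end PositiveForms

section Orbits

variable {M : VonNeumannAlgebra H} {ξ₀ : H}

/-- The evaluation map `x ↦ x v` of `M` at the vector `v`, whose range is the orbit `M v`. -/
noncomputable def orbitMap (M : VonNeumannAlgebra H) (v : H) : M.toStarSubalgebra →ₗ[ℂ] H :=
  (ContinuousLinearMap.apply ℂ H v).toLinearMap ∘ₗ M.toStarSubalgebra.subtype.toLinearMap

@[simp]
theorem orbitMap_apply (M : VonNeumannAlgebra H) (v : H) (x : M.toStarSubalgebra) :
    orbitMap M v x = (x : H →L[ℂ] H) v :=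
  rfl

theorem isCyclicVector_iff_denseRange_orbitMap :
    IsCyclicVector M ξ₀ ↔ DenseRange (orbitMap M ξ₀) := by
  have himage : (fun x : H →L[ℂ] H => x ξ₀) '' (M : Set (H →L[ℂ] H)) =
      LinearMap.range (orbitMap M ξ₀) := by
    ext v
    simp
  rw [IsCyclicVector, himage, Submodule.span_eq, LinearMap.coe_range, DenseRange]

theorem starProjection_closure_range_orbitMap_mem_commutant (M : VonNeumannAlgebra H) (v : H) :
    (LinearMap.range (orbitMap M v)).topologicalClosure.starProjection ∈ M.commutant := by
  rw [VonNeumannAlgebra.IsStarProjection.mem_iff isStarProjection_starProjection,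
    VonNeumannAlgebra.commutant_commutant]
  intro y hy
  rw [Submodule.range_starProjection, Module.End.mem_invtSubmodule]
  intro w hw
  refine map_mem_closure y.continuous hw ?_
  rintro _ ⟨x, rfl⟩
  exact ⟨⟨y, hy⟩ * x, rfl⟩

theorem IsSeparatingVector.isCyclicVector_commutant (hsep : IsSeparatingVector M ξ₀) :
    IsCyclicVector M.commutant ξ₀ := by
  set K := (LinearMap.range (orbitMap M.commutant ξ₀)).topologicalClosure
  have hproj : K.starProjection ∈ M := by
    simpa only [VonNeumannAlgebra.commutant_commutant] using
      starProjection_closure_range_orbitMap_mem_commutant M.commutant ξ₀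
  have hξ₀ : ξ₀ ∈ K := Submodule.le_topologicalClosure _ ⟨1, rfl⟩
  have hone : K.starProjection = 1 := by
    refine sub_eq_zero.1 (hsep _ (sub_mem hproj (one_mem M)) ?_)
    simp [Submodule.starProjection_eq_self_iff.2 hξ₀]
  have htop : K = ⊤ :=
    Submodule.starProjection_inj.1 (hone.trans Submodule.starProjection_top'.symm)
  rwa [isCyclicVector_iff_denseRange_orbitMap, DenseRange, ← LinearMap.coe_range,
    Submodule.dense_iff_topologicalClosure_eq_top]

theorem IsCyclicVector.mem_commutant_of_map_apply (hcyc : IsCyclicVector M ξ₀) {T : H →L[ℂ] H}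
    (hT : ∀ x ∈ M, T (x ξ₀) = x (T ξ₀)) : T ∈ M.commutant := by
  rw [VonNeumannAlgebra.mem_commutant_iff]
  intro y hy
  refine ContinuousLinearMap.coeFn_injective <|
    (isCyclicVector_iff_denseRange_orbitMap.1 hcyc).equalizer (by fun_prop) (by fun_prop) ?_
  ext ⟨x, hx⟩
  change y (T (x ξ₀)) = T ((y * x) ξ₀)
  rw [hT x hx, hT _ (mul_mem hy hx)]
  rfl

end Orbits

section SharpCone

variable {M : VonNeumannAlgebra H} {ξ₀ : H}

theorem inner_commutant_apply_nonneg_of_mem_sharpCone {v : H} (hv : v ∈ sharpCone M ξ₀)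
    {x : H →L[ℂ] H} (hx : x ∈ M.commutant) : 0 ≤ ⟪x v, x ξ₀⟫_ℂ := by
  refine closure_minimal (t := {w | 0 ≤ ⟪x w, x ξ₀⟫_ℂ}) ?_
    (isClosed_le (by fun_prop) (by fun_prop)) hv
  rintro _ ⟨a, ha, hpos, rfl⟩
  have hcomm : x (a ξ₀) = a (x ξ₀) :=
    (DFunLike.congr_fun (VonNeumannAlgebra.mem_commutant_iff.1 hx a ha) ξ₀).symm
  change 0 ≤ ⟪x (a ξ₀), x ξ₀⟫_ℂ
  exact hcomm ▸ hpos.inner_nonneg_left (x ξ₀)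

theorem exists_mem_nonneg_le_one_apply_eq_of_mem_sharpCone (hcyc : IsCyclicVector M.commutant ξ₀)
    {ζ : H} (hζ : ζ ∈ sharpCone M ξ₀) (hζ' : ξ₀ - ζ ∈ sharpCone M ξ₀) :
    ∃ a ∈ M, 0 ≤ a ∧ a ≤ 1 ∧ a ξ₀ = ζ := by
  obtain ⟨a, h₀, h₁, ha⟩ := exists_nonneg_le_one_map_eq
    (A := orbitMap M.commutant ξ₀) (B := orbitMap M.commutant ζ)
    (isCyclicVector_iff_denseRange_orbitMap.1 hcyc)
    (fun x => inner_commutant_apply_nonneg_of_mem_sharpCone hζ x.2)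
    (fun x => by
      simpa [inner_sub_left] using inner_commutant_apply_nonneg_of_mem_sharpCone hζ' x.2)
  have haξ₀ : a ξ₀ = ζ := ha 1
  have haM : a ∈ M.commutant.commutant :=
    hcyc.mem_commutant_of_map_apply fun x hx => haξ₀.symm ▸ ha ⟨x, hx⟩
  exact ⟨a, M.commutant_commutant ▸ haM, h₀, h₁, haξ₀⟩

end SharpCone

theorem stmt14_general (M : VonNeumannAlgebra H) (ξ₀ : H) (hsep : IsSeparatingVector M ξ₀)
    (ζ : H) (hζ : ζ ∈ sharpCone M ξ₀) (hζ' : ξ₀ - ζ ∈ sharpCone M ξ₀)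
    (horth : ⟪ζ, ξ₀ - ζ⟫_ℂ = 0) :
    ∃ e : H →L[ℂ] H, e ∈ M ∧ IsSelfAdjoint e ∧ e * e = e ∧ ζ = e ξ₀ := by
  obtain ⟨a, haM, h₀, h₁, rfl⟩ := exists_mem_nonneg_le_one_apply_eq_of_mem_sharpCone
    hsep.isCyclicVector_commutant hζ hζ'
  have hidem : a * a = a := by
    refine sub_eq_zero.1 (hsep _ (sub_mem (mul_mem haM haM) haM) ?_)
    exact sub_eq_zero.2 (apply_apply_eq_of_inner_sub_eq_zero h₀ h₁ horth)
  exact ⟨a, haM, .of_nonneg h₀, hidem, rfl⟩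

/-- If `ζ ∈ P♯`, `ξ₀ - ζ ∈ P♯`, and `ζ ⊥ (ξ₀ - ζ)`, then `ζ = e ξ₀` for some
projection `e ∈ M`. -/
theorem stmt14 (M : VonNeumannAlgebra H) (ξ₀ : H)
    (hcyc : IsCyclicVector M ξ₀) (hsep : IsSeparatingVector M ξ₀)
    (ζ : H) (hζ : ζ ∈ sharpCone M ξ₀) (hζ' : ξ₀ - ζ ∈ sharpCone M ξ₀)
    (horth : ⟪ζ, ξ₀ - ζ⟫_ℂ = 0) :
    ∃ e : H →L[ℂ] H, e ∈ M ∧ IsSelfAdjoint e ∧ e * e = e ∧ ζ = e ξ₀ :=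
  stmt14_general M ξ₀ hsep ζ hζ hζ' horth
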